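/- There is a universal constant C > 0 such that the following holds. Suppose G_k ≤ 1 for every k = 1,…,N. Then for every k and every t ∈ [t_{k−1}, t_k], the forward process satisfies E‖x_t − x_{t_k}‖² ≤ C·(d·G_{t,t_k} + M₂·G_{t,t_k}²), and consequently Σ_{k=1}^N ∫_{t_{k−1}}^{t_k} g(t)²·E‖x_t − x_{t_k}‖² dt ≤ C·(d·Π₂ + M₂·Π₃). -/

import Mathlib

open MeasureTheory Real

noncomputable section

namespace DiffusionKL

/-- Euclidean space `ℝ^d`. -/
abbrev Vec (d : ℕ) := EuclideanSpace ℝ (Fin d)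

/-- Density of the isotropic Gaussian `N(m, v·I_d)` on `ℝ^d`. -/
def gaussDensity (d : ℕ) (m : Vec d) (v : ℝ) (x : Vec d) : ℝ :=
  (2 * π * v) ^ (-(d : ℝ) / 2) * Real.exp (-‖x - m‖ ^ 2 / (2 * v))

/-- The isotropic Gaussian measure `N(m, v·I_d)` on `ℝ^d`. -/
def gaussMeasure (d : ℕ) (m : Vec d) (v : ℝ) : Measure (Vec d) :=
  MeasureTheory.volume.withDensity (fun x => ENNReal.ofReal (gaussDensity d m v x))

/-- The standard Gaussian measure `γ_d = N(0, I_d)` on `ℝ^d`. -/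
def stdGauss (d : ℕ) : Measure (Vec d) := gaussMeasure d 0 1

/-- Kullback-Leibler divergence `KL(μ ‖ ν) = ∫ log (dμ/dν) dμ`. -/
def KLdiv {d : ℕ} (μ ν : Measure (Vec d)) : ℝ :=
  ∫ x, Real.log ((μ.rnDeriv ν x).toReal) ∂μ

/-- `G_{t,s} = ∫_t^s g(u)² du`. -/
def Gvar (g : ℝ → ℝ) (t s : ℝ) : ℝ := ∫ u in t..s, (g u) ^ 2

/-- `α_{t,s} = exp(−G_{t,s}/2)`. -/
def alphaF (g : ℝ → ℝ) (t s : ℝ) : ℝ := Real.exp (-(Gvar g t s) / 2)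

/-- `σ_t² = 1 − exp(−G_t)`. -/
def sigmaSq (g : ℝ → ℝ) (t : ℝ) : ℝ := 1 - Real.exp (-(Gvar g 0 t))

/-- The law of the forward marginal `x_t = α_t X₀ + σ_t Z`, `X₀ ∼ P`, `Z ∼ N(0,I_d)` indep. -/
def forwardLaw (d : ℕ) (P : Measure (Vec d)) (g : ℝ → ℝ) (t : ℝ) : Measure (Vec d) :=
  Measure.map (fun q : Vec d × Vec d => alphaF g 0 t • q.1 + Real.sqrt (sigmaSq g t) • q.2)
    (P.prod (stdGauss d))

/-- Explicit density of the forward marginal `p_t` (for `t > 0`). -/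
def forwardDensity (d : ℕ) (P : Measure (Vec d)) (g : ℝ → ℝ) (t : ℝ) (x : Vec d) : ℝ :=
  (2 * π * sigmaSq g t) ^ (-(d : ℝ) / 2) *
    ∫ y, Real.exp (-‖x - alphaF g 0 t • y‖ ^ 2 / (2 * sigmaSq g t)) ∂P

/-- Score function `∇ log p` of a density `p`. -/
def scoreOf {d : ℕ} (p : Vec d → ℝ) (x : Vec d) : Vec d :=
  gradient (fun z => Real.log (p z)) x

/-- Score `∇ log p_t` of the forward marginal at time `t > 0`. -/
def fwdScore (d : ℕ) (P : Measure (Vec d)) (g : ℝ → ℝ) (t : ℝ) : Vec d → Vec d :=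
  scoreOf (forwardDensity d P g t)

/-- Underlying measure for the joint forward coupling: `ω = (X₀, Z, Z')`. -/
def coupleMeasure (d : ℕ) (P : Measure (Vec d)) : Measure (Vec d × Vec d × Vec d) :=
  P.prod ((stdGauss d).prod (stdGauss d))

/-- The forward process at time `t`: `x_t(ω) = α_t X₀ + σ_t Z`. -/
def xt (d : ℕ) (g : ℝ → ℝ) (t : ℝ) (ω : Vec d × Vec d × Vec d) : Vec d :=
  alphaF g 0 t • ω.1 + Real.sqrt (sigmaSq g t) • ω.2.1

/-- The forward process at time `s ≥ t`, coupled with `x_t` by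
`x_s = α_{t,s} x_t + √(1−α_{t,s}²) Z'`. -/
def xts (d : ℕ) (g : ℝ → ℝ) (t s : ℝ) (ω : Vec d × Vec d × Vec d) : Vec d :=
  alphaF g t s • xt d g t ω + Real.sqrt (1 - (alphaF g t s) ^ 2) • ω.2.2

/-- Law of a Markov chain after `n` steps, started at `init`, with transition kernels `κ`. -/
def chainLaw (d : ℕ) (init : Measure (Vec d)) (κ : ℕ → Vec d → Measure (Vec d)) :
    ℕ → Measure (Vec d)
  | 0 => init
  | k + 1 => (chainLaw d init κ k).bind (κ k)

/-- One step of the exponential-integrator sampler: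
`ŷ_{k+1} | ŷ_k = a ∼ N(e^{G_{N−k}/2}·a + 2(e^{G_{N−k}/2} − 1)·s(a,t_{N−k}), (e^{G_{N−k}} − 1)·I_d)`. -/
def EIstep (d N : ℕ) (tp : ℕ → ℝ) (g : ℝ → ℝ) (sc : Vec d → ℝ → Vec d) (k : ℕ) (a : Vec d) :
    Measure (Vec d) :=
  gaussMeasure d
    (Real.exp (Gvar g (tp (N - k - 1)) (tp (N - k)) / 2) • a +
      (2 * (Real.exp (Gvar g (tp (N - k - 1)) (tp (N - k)) / 2) - 1)) • sc a (tp (N - k)))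
    (Real.exp (Gvar g (tp (N - k - 1)) (tp (N - k))) - 1)

/-- One step of the Euler–Maruyama sampler:
`ŷ_{k+1} | ŷ_k = a ∼ N((1 + G_{N−k}/2)·a + G_{N−k}·s(a,t_{N−k}), G_{N−k}·I_d)`. -/
def EMstep (d N : ℕ) (tp : ℕ → ℝ) (g : ℝ → ℝ) (sc : Vec d → ℝ → Vec d) (k : ℕ) (a : Vec d) :
    Measure (Vec d) :=
  gaussMeasure d
    ((1 + Gvar g (tp (N - k - 1)) (tp (N - k)) / 2) • a +
      (Gvar g (tp (N - k - 1)) (tp (N - k))) • sc a (tp (N - k)))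
    (Gvar g (tp (N - k - 1)) (tp (N - k)))

/-- Terminal law of the exponential-integrator sampler started at `N(0,I_d)`. -/
def EIlaw (d N : ℕ) (tp : ℕ → ℝ) (g : ℝ → ℝ) (sc : Vec d → ℝ → Vec d) : Measure (Vec d) :=
  chainLaw d (stdGauss d) (EIstep d N tp g sc) N

/-- Terminal law of the Euler–Maruyama sampler started at `N(0,I_d)`. -/
def EMlaw (d N : ℕ) (tp : ℕ → ℝ) (g : ℝ → ℝ) (sc : Vec d → ℝ → Vec d) : Measure (Vec d) :=
  chainLaw d (stdGauss d) (EMstep d N tp g sc) N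

/-- The weighted L² score estimation error
`(1/G_T)·Σ_{k=1}^N G_k·E_{p_{t_k}} ‖∇log p_{t_k}(x) − s(x,t_k)‖²`. -/
def scoreErr (d N : ℕ) (P : Measure (Vec d)) (g : ℝ → ℝ) (tp : ℕ → ℝ)
    (sc : Vec d → ℝ → Vec d) : ℝ :=
  (1 / Gvar g 0 (tp N)) * ∑ k ∈ Finset.range N,
    Gvar g (tp k) (tp (k + 1)) *
      ∫ x, ‖fwdScore d P g (tp (k + 1)) x - sc x (tp (k + 1))‖ ^ 2
        ∂(forwardLaw d P g (tp (k + 1)))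

/-- Entry `(i,j)` of the Hessian matrix `∇²f(x)`. -/
def hessEntry {d : ℕ} (f : Vec d → ℝ) (x : Vec d) (i j : Fin d) : ℝ :=
  fderiv ℝ (fun y => fderiv ℝ f y (EuclideanSpace.single j 1)) x (EuclideanSpace.single i 1)

/-- Frobenius norm of the Hessian matrix `∇²f(x)`. -/
def hessFrob {d : ℕ} (f : Vec d → ℝ) (x : Vec d) : ℝ :=
  Real.sqrt (∑ i, ∑ j, (hessEntry f x i j) ^ 2)

/-- Density of the Gaussian perturbation `X + σZ`, `X ∼ P`, `Z ∼ N(0,I_d)`. -/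
def perturbDensity (d : ℕ) (P : Measure (Vec d)) (σ : ℝ) (x : Vec d) : ℝ :=
  (2 * π * σ ^ 2) ^ (-(d : ℝ) / 2) * ∫ y, Real.exp (-‖x - y‖ ^ 2 / (2 * σ ^ 2)) ∂P

/-- Density of `μY + σZ`, `Y ∼ P`, `Z ∼ N(0,I_d)`. -/
def perturbDensity' (d : ℕ) (P : Measure (Vec d)) (μ σ : ℝ) (x : Vec d) : ℝ :=
  (2 * π * σ ^ 2) ^ (-(d : ℝ) / 2) * ∫ y, Real.exp (-‖x - μ • y‖ ^ 2 / (2 * σ ^ 2)) ∂P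

/-- Law of the Gaussian perturbation `X + σZ`. -/
def perturbLaw (d : ℕ) (P : Measure (Vec d)) (σ : ℝ) : Measure (Vec d) :=
  Measure.map (fun q : Vec d × Vec d => q.1 + σ • q.2)
    (P.prod (MeasureTheory.volume.withDensity
      (fun x : Vec d => ENNReal.ofReal ((2 * π) ^ (-(d : ℝ) / 2) * Real.exp (-‖x‖ ^ 2 / 2)))))

/-- The tilted conditional measure `dP̃_{μ,σ}(y|x) ∝ exp(−‖x−μy‖²/(2σ²)) dP(y)`. -/
def tiltMeasure (d : ℕ) (P : Measure (Vec d)) (μ σ : ℝ) (x : Vec d) : Measure (Vec d) :=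
  ((P.withDensity (fun y => ENNReal.ofReal (Real.exp (-‖x - μ • y‖ ^ 2 / (2 * σ ^ 2))))) Set.univ)⁻¹ •
    P.withDensity (fun y => ENNReal.ofReal (Real.exp (-‖x - μ • y‖ ^ 2 / (2 * σ ^ 2))))

/-- Sub-exponential (ψ₁-Orlicz) norm of `f` under the measure `μ`. -/
def psi1Norm {α : Type*} [MeasurableSpace α] (μ : Measure α) (f : α → ℝ) : ℝ :=
  sInf {t : ℝ | 0 < t ∧ ∫ x, Real.exp (|f x| / t) ∂μ ≤ 2}

/-- Sub-Gaussian (ψ₂-Orlicz) norm of `f` under the measure `μ`. -/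
def psi2Norm {α : Type*} [MeasurableSpace α] (μ : Measure α) (f : α → ℝ) : ℝ :=
  sInf {t : ℝ | 0 < t ∧ ∫ x, Real.exp ((f x) ^ 2 / t ^ 2) ∂μ ≤ 2}


/-!
With `α = α_{t,s}`, the increment `x_t - x_s = (1 - α) α_t X₀ + (1 - α) σ_t Z - √(1 - α²) Z'` is a
sum of independent terms of which the last two are centred, so their second moments add up exactly.
As `α_t² ≤ 1` and `σ_t² ≤ 1`, the coefficient of `d` is at most
`(1 - α)² + (1 - α²) = 2 (1 - α) ≤ G_{t,s}`, and that of `M₂` is at most `(1 - α)² ≤ G_{t,s}²`.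
For the sum, bound `G_{t,t_k}` by `G_k` and integrate `g²` over each step.
-/

open ProbabilityTheory Module
open scoped RealInnerProductSpace

section SecondMoments

lemma integral_norm_add_sq_prod {α β E : Type*} [MeasurableSpace α] [MeasurableSpace β]
    [NormedAddCommGroup E] [InnerProductSpace ℝ E] [CompleteSpace E]
    {μ : Measure α} {ν : Measure β} [IsProbabilityMeasure μ] [IsProbabilityMeasure ν]
    {f : α → E} {g : β → E} (hf : MemLp f 2 μ) (hg : MemLp g 2 ν) (hg0 : ∫ y, g y ∂ν = 0) :
    ∫ p, ‖f p.1 + g p.2‖ ^ 2 ∂(μ.prod ν) = ∫ x, ‖f x‖ ^ 2 ∂μ + ∫ y, ‖g y‖ ^ 2 ∂ν := by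
  have hfi := hf.integrable one_le_two
  have hgi := hg.integrable one_le_two
  have hf2 := ((memLp_two_iff_integrable_sq_norm hf.1).1 hf).comp_fst ν
  have hg2 := ((memLp_two_iff_integrable_sq_norm hg.1).1 hg).comp_snd μ
  have hfg : Integrable (fun p : α × β ↦ ⟪f p.1, g p.2⟫) (μ.prod ν) :=
    hfi.op_fst_snd continuous_inner ⟨1, fun x y ↦ by
      simpa using norm_inner_le_norm (𝕜 := ℝ) x y⟩ hgi
  have cross : ∫ p : α × β, ⟪f p.1, g p.2⟫ ∂(μ.prod ν) = 0 := by
    simpa [hg0, innerSL_apply_apply ℝ] using integral_prod_bilin (innerSL ℝ) hfi hgi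
  simp only [norm_add_sq_real]
  rw [integral_add (by exact hf2.add (hfg.const_mul 2)) hg2,
    integral_add hf2 (hfg.const_mul 2),
    integral_const_mul, cross, integral_fun_fst (f := fun x ↦ ‖f x‖ ^ 2),
    integral_fun_snd (f := fun y ↦ ‖g y‖ ^ 2)]
  simp

lemma integral_norm_sq_stdGaussian (E : Type*) [NormedAddCommGroup E] [InnerProductSpace ℝ E]
    [FiniteDimensional ℝ E] [MeasurableSpace E] [BorelSpace E] :
    ∫ x, ‖x‖ ^ 2 ∂(stdGaussian E) = finrank ℝ E := by
  let b := stdOrthonormalBasis ℝ E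
  have hint (i) : Integrable (fun x ↦ ⟪b i, x⟫ ^ 2) (stdGaussian E) :=
    (IsGaussian.memLp_two_id.const_inner (b i)).integrable_sq
  have hcoord (i) : ∫ x, ⟪b i, x⟫ ^ 2 ∂(stdGaussian E) = 1 := by
    have := variance_dual_stdGaussian (innerSL ℝ (b i))
    rw [variance_of_integral_eq_zero (by fun_prop) (integral_strongDual_stdGaussian _)] at this
    simpa using this
  simp_rw [← b.sum_sq_inner_right]
  rw [integral_finsetSum _ fun i _ ↦ hint i]
  simp [hcoord]

end SecondMoments

section IsotropicGaussian

variable {d : ℕ} {v : ℝ}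

lemma gaussDensity_eq (m : Vec d) (v : ℝ) (x : Vec d) :
    gaussDensity d m v x =
      (2 * π * v) ^ (-(d : ℝ) / 2) * exp (-(1 / (2 * v)) * ‖x - m‖ ^ 2) := by
  rw [gaussDensity]
  ring_nf

lemma integral_gaussMeasure {F : Type*} [NormedAddCommGroup F] [NormedSpace ℝ F] (m : Vec d)
    (hv : 0 ≤ v) (f : Vec d → F) :
    ∫ x, f x ∂(gaussMeasure d m v) = ∫ x, gaussDensity d m v x • f x := by
  have density_nonneg (x : Vec d) : 0 ≤ gaussDensity d m v x := by
    unfold gaussDensity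
    positivity
  rw [gaussMeasure, integral_withDensity_eq_integral_toReal_smul]
  · simp only [ENNReal.toReal_ofReal (density_nonneg _)]
  · unfold gaussDensity
    fun_prop
  · simp

lemma integrable_gaussDensity (m : Vec d) (hv : 0 < v) : Integrable (gaussDensity d m v) := by
  have centered : Integrable fun x : Vec d ↦ exp (-(1 / (2 * v)) * ‖x‖ ^ 2) := by
    refine not_imp_comm.1 integral_undef ?_
    rw [GaussianFourier.integral_rexp_neg_mul_sq_norm (by positivity)]
    positivity
  rw [funext (gaussDensity_eq m v)]
  exact (centered.comp_sub_right m).const_mul _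

lemma isFiniteMeasure_gaussMeasure (m : Vec d) (hv : 0 < v) :
    IsFiniteMeasure (gaussMeasure d m v) :=
  isFiniteMeasure_withDensity_ofReal (integrable_gaussDensity m hv).hasFiniteIntegral

lemma integral_cexp_neg_norm_sq_add_inner (hv : 0 < v) (t : Vec d) :
    ∫ x : Vec d, Complex.exp (-(1 / (2 * v)) * ‖x‖ ^ 2 + Complex.I * ⟪t, x⟫) =
      (2 * π * v : ℂ) ^ (d / 2 : ℂ) * Complex.exp (-v * ‖t‖ ^ 2 / 2) := by
  have hv0 : (v : ℂ) ≠ 0 := by exact_mod_cast hv.ne'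
  have hre : 0 < (1 / (2 * v) : ℂ).re := by
    rw [show (1 / (2 * v) : ℂ) = ((1 / (2 * v) : ℝ) : ℂ) by push_cast; rfl, Complex.ofReal_re]
    positivity
  rw [GaussianFourier.integral_cexp_neg_mul_sq_norm_add hre Complex.I t,
    finrank_euclideanSpace_fin, Complex.I_sq]
  congr 2 <;> field_simp
  ring

lemma charFun_gaussMeasure (m : Vec d) (hv : 0 < v) (t : Vec d) :
    charFun (gaussMeasure d m v) t =
      Complex.exp (⟪m, t⟫ * Complex.I - v * ‖t‖ ^ 2 / 2) := by
  have integrand (x : Vec d) :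
      gaussDensity d m v (x + m) • Complex.exp (⟪x + m, t⟫ * Complex.I) =
        (((2 * π * v) ^ (-(d : ℝ) / 2) : ℝ) * Complex.exp (⟪m, t⟫ * Complex.I)) *
          Complex.exp (-(1 / (2 * v)) * ‖x‖ ^ 2 + Complex.I * ⟪t, x⟫) := by
    rw [gaussDensity_eq, add_sub_cancel_right, inner_add_left, real_inner_comm t x,
      Complex.real_smul, Complex.exp_add]
    push_cast
    rw [add_mul, Complex.exp_add]
    ring_nf
  have normalization :
      (((2 * π * v) ^ (-(d : ℝ) / 2) : ℝ) : ℂ) * (2 * π * v : ℂ) ^ (d / 2 : ℂ) = 1 := by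
    have base_ne : (2 * π * v : ℂ) ≠ 0 := by
      exact_mod_cast (mul_pos two_pi_pos hv).ne'
    rw [Complex.ofReal_cpow (by positivity)]
    push_cast
    rw [← Complex.cpow_add _ _ base_ne, neg_div, neg_add_cancel, Complex.cpow_zero]
  rw [charFun_apply, integral_gaussMeasure m hv.le, ← integral_add_right_eq_self _ m]
  simp only [integrand]
  rw [integral_const_mul, integral_cexp_neg_norm_sq_add_inner hv, mul_mul_mul_comm,
    normalization, one_mul, ← Complex.exp_add]
  ring_nf

lemma stdGauss_eq_stdGaussian : stdGauss d = stdGaussian (Vec d) := by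
  have : IsFiniteMeasure (stdGauss d) := isFiniteMeasure_gaussMeasure 0 one_pos
  refine Measure.ext_of_charFun (funext fun t ↦ ?_)
  rw [charFun_stdGaussian, stdGauss, charFun_gaussMeasure 0 one_pos]
  simp [neg_div]

end IsotropicGaussian

section ForwardProcess

variable {d : ℕ} {P : Measure (Vec d)} {g : ℝ → ℝ} {t s : ℝ}

lemma Gvar_nonneg (hts : t ≤ s) : 0 ≤ Gvar g t s :=
  intervalIntegral.integral_nonneg hts fun _ _ ↦ sq_nonneg _

lemma Gvar_anti_left {r : ℝ} (hg : IntervalIntegrable (fun u ↦ g u ^ 2) volume r s)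
    (hrt : r ≤ t) (hts : t ≤ s) : Gvar g t s ≤ Gvar g r s :=
  intervalIntegral.integral_mono_interval hrt hts le_rfl
    (Filter.Eventually.of_forall fun _ ↦ sq_nonneg _) hg

lemma alphaF_nonneg : 0 ≤ alphaF g t s := (exp_pos _).le

lemma alphaF_le_one (hts : t ≤ s) : alphaF g t s ≤ 1 :=
  exp_le_one_iff.2 (by linarith [Gvar_nonneg (g := g) hts])

lemma one_sub_alphaF_le : 1 - alphaF g t s ≤ Gvar g t s / 2 := by
  have := add_one_le_exp (-(Gvar g t s) / 2)
  rw [alphaF]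
  linarith

lemma sigmaSq_eq_one_sub_alphaF_sq : sigmaSq g t = 1 - alphaF g 0 t ^ 2 := by
  rw [sigmaSq, alphaF, ← exp_nat_mul]
  ring_nf

lemma xt_sub_xts (ω : Vec d × Vec d × Vec d) :
    xt d g t ω - xts d g t s ω =
      ((1 - alphaF g t s) * alphaF g 0 t) • ω.1 +
        (((1 - alphaF g t s) * √(sigmaSq g t)) • ω.2.1 +
          (-√(1 - alphaF g t s ^ 2)) • ω.2.2) := by
  unfold xts xt
  module

lemma integral_norm_sq_coupleMeasure [IsProbabilityMeasure P]
    (hP : Integrable (fun x ↦ ‖x‖ ^ 2) P) (a b c : ℝ) :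
    ∫ ω, ‖a • ω.1 + (b • ω.2.1 + c • ω.2.2)‖ ^ 2 ∂(coupleMeasure d P) =
      a ^ 2 * ∫ x, ‖x‖ ^ 2 ∂P + (b ^ 2 + c ^ 2) * d := by
  have hX : MemLp (fun x ↦ a • x) 2 P :=
    ((memLp_two_iff_integrable_sq_norm (by fun_prop)).2 hP).const_smul a
  have hZ (r : ℝ) : MemLp (fun z ↦ r • z) 2 (stdGaussian (Vec d)) :=
    IsGaussian.memLp_two_id.const_smul r
  have hZ0 (r : ℝ) : ∫ z, r • z ∂(stdGaussian (Vec d)) = 0 := by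
    rw [integral_smul, integral_id_stdGaussian, smul_zero]
  have hZZ : MemLp (fun z : Vec d × Vec d ↦ b • z.1 + c • z.2) 2
      ((stdGaussian (Vec d)).prod (stdGaussian (Vec d))) :=
    ((hZ b).comp_fst _).add ((hZ c).comp_snd _)
  have hZZ0 : ∫ z : Vec d × Vec d, b • z.1 + c • z.2
      ∂((stdGaussian (Vec d)).prod (stdGaussian (Vec d))) = 0 := by
    rw [integral_add (((hZ b).comp_fst _).integrable one_le_two)
      (((hZ c).comp_snd _).integrable one_le_two), integral_fun_fst (f := fun z ↦ b • z),
      integral_fun_snd (f := fun z ↦ c • z), hZ0, hZ0]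
    simp only [smul_zero, add_zero]
  rw [coupleMeasure, stdGauss_eq_stdGaussian,
    integral_norm_add_sq_prod hX hZZ hZZ0,
    integral_norm_add_sq_prod (hZ b) (hZ c) (hZ0 c)]
  simp only [norm_smul, mul_pow, norm_eq_abs, sq_abs, integral_const_mul,
    integral_norm_sq_stdGaussian, finrank_euclideanSpace_fin]
  ring

lemma integral_norm_sq_xt_sub_xts [IsProbabilityMeasure P]
    (hP : Integrable (fun x ↦ ‖x‖ ^ 2) P) (ht : 0 ≤ t) (hts : t ≤ s) :
    ∫ ω, ‖xt d g t ω - xts d g t s ω‖ ^ 2 ∂(coupleMeasure d P) =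
      (1 - alphaF g t s) ^ 2 * (alphaF g 0 t ^ 2 * ∫ x, ‖x‖ ^ 2 ∂P + sigmaSq g t * d) +
        (1 - alphaF g t s ^ 2) * d := by
  have sigmaSq_nonneg : 0 ≤ sigmaSq g t := by
    rw [sigmaSq_eq_one_sub_alphaF_sq, sub_nonneg]
    exact pow_le_one₀ alphaF_nonneg (alphaF_le_one ht)
  have noise_nonneg : 0 ≤ 1 - alphaF g t s ^ 2 :=
    sub_nonneg.2 (pow_le_one₀ alphaF_nonneg (alphaF_le_one hts))
  simp only [xt_sub_xts, integral_norm_sq_coupleMeasure hP, mul_pow, neg_sq,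
    sq_sqrt sigmaSq_nonneg, sq_sqrt noise_nonneg]
  ring

lemma integral_norm_sq_xt_sub_xts_le [IsProbabilityMeasure P]
    (hP : Integrable (fun x ↦ ‖x‖ ^ 2) P) (ht : 0 ≤ t) (hts : t ≤ s) :
    ∫ ω, ‖xt d g t ω - xts d g t s ω‖ ^ 2 ∂(coupleMeasure d P) ≤
      d * Gvar g t s + (∫ x, ‖x‖ ^ 2 ∂P) * Gvar g t s ^ 2 := by
  rw [integral_norm_sq_xt_sub_xts hP ht hts]
  set M := ∫ x, ‖x‖ ^ 2 ∂P
  set a := alphaF g t s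
  have : 0 ≤ M := integral_nonneg fun _ ↦ sq_nonneg _
  have hG : 0 ≤ Gvar g t s := Gvar_nonneg hts
  have ha0 : 0 ≤ 1 - a := sub_nonneg.2 (alphaF_le_one hts)
  have haG : 1 - a ≤ Gvar g t s / 2 := one_sub_alphaF_le
  have halpha : alphaF g 0 t ^ 2 ≤ 1 := pow_le_one₀ alphaF_nonneg (alphaF_le_one ht)
  have hsigma : sigmaSq g t ≤ 1 := sub_le_self 1 (exp_pos _).le
  calc (1 - a) ^ 2 * (alphaF g 0 t ^ 2 * M + sigmaSq g t * d) + (1 - a ^ 2) * d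
      ≤ (1 - a) ^ 2 * (1 * M + 1 * d) + (1 - a ^ 2) * d := by gcongr
    _ = d * (2 * (1 - a)) + M * (1 - a) ^ 2 := by ring
    _ ≤ d * Gvar g t s + M * Gvar g t s ^ 2 := by
      gcongr
      · linarith
      · linarith

lemma integral_sq_mul_le_Gvar_mul {F : ℝ → ℝ} {B : ℝ}
    (hg : IntervalIntegrable (fun u ↦ g u ^ 2) volume t s) (hts : t ≤ s)
    (hF0 : ∀ u, 0 ≤ F u) (hFB : ∀ u ∈ Set.Icc t s, F u ≤ B) :
    ∫ u in t..s, g u ^ 2 * F u ≤ Gvar g t s * B := by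
  rw [Gvar, ← intervalIntegral.integral_mul_const, intervalIntegral.integral_of_le hts,
    intervalIntegral.integral_of_le hts]
  refine integral_mono_of_nonneg (.of_forall fun u ↦ mul_nonneg (sq_nonneg _) (hF0 u))
    (hg.mul_const B).1 (ae_restrict_of_forall_mem measurableSet_Ioc fun u hu ↦ ?_)
  exact mul_le_mul_of_nonneg_left (hFB u (Set.Ioc_subset_Icc_self hu)) (sq_nonneg _)

lemma integral_sq_mul_integral_norm_sq_xt_sub_xts_le [IsProbabilityMeasure P]
    (hP : Integrable (fun x ↦ ‖x‖ ^ 2) P)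
    (hg : IntervalIntegrable (fun u ↦ g u ^ 2) volume t s) (ht : 0 ≤ t) (hts : t ≤ s) :
    ∫ u in t..s, g u ^ 2 * ∫ ω, ‖xt d g u ω - xts d g u s ω‖ ^ 2 ∂(coupleMeasure d P) ≤
      d * Gvar g t s ^ 2 + (∫ x, ‖x‖ ^ 2 ∂P) * Gvar g t s ^ 3 := by
  calc ∫ u in t..s, g u ^ 2 * ∫ ω, ‖xt d g u ω - xts d g u s ω‖ ^ 2 ∂(coupleMeasure d P)
      ≤ Gvar g t s * (d * Gvar g t s + (∫ x, ‖x‖ ^ 2 ∂P) * Gvar g t s ^ 2) := by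
        refine integral_sq_mul_le_Gvar_mul hg hts
          (fun _ ↦ integral_nonneg fun _ ↦ sq_nonneg _) fun u hu ↦ ?_
        refine (integral_norm_sq_xt_sub_xts_le hP (ht.trans hu.1) hu.2).trans ?_
        have : 0 ≤ ∫ x, ‖x‖ ^ 2 ∂P := integral_nonneg fun _ ↦ sq_nonneg _
        have hG : 0 ≤ Gvar g u s := Gvar_nonneg hu.2
        gcongr <;> exact Gvar_anti_left hg hu.1 hu.2
    _ = d * Gvar g t s ^ 2 + (∫ x, ‖x‖ ^ 2 ∂P) * Gvar g t s ^ 3 := by ring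

end ForwardProcess

theorem statement6_general {d N : ℕ} {P : Measure (Vec d)} [IsProbabilityMeasure P] {g : ℝ → ℝ}
    {tp : ℕ → ℝ} (hg : IntegrableOn (fun u ↦ g u ^ 2) (Set.Icc 0 (tp N)))
    (h0 : 0 ≤ tp 0) (htp : ∀ k < N, tp k ≤ tp (k + 1)) (hP : Integrable (fun x ↦ ‖x‖ ^ 2) P) :
    (∀ k, 1 ≤ k → k ≤ N → ∀ t ∈ Set.Icc (tp (k - 1)) (tp k),
      (∫ ω, ‖xt d g t ω - xts d g t (tp k) ω‖ ^ 2 ∂(coupleMeasure d P)) ≤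
        d * Gvar g t (tp k) + (∫ x, ‖x‖ ^ 2 ∂P) * Gvar g t (tp k) ^ 2) ∧
    (∑ k ∈ Finset.range N, ∫ t in tp k..tp (k + 1),
        g t ^ 2 * ∫ ω, ‖xt d g t ω - xts d g t (tp (k + 1)) ω‖ ^ 2 ∂(coupleMeasure d P)) ≤
      d * ∑ k ∈ Finset.range N, Gvar g (tp k) (tp (k + 1)) ^ 2 +
        (∫ x, ‖x‖ ^ 2 ∂P) * ∑ k ∈ Finset.range N, Gvar g (tp k) (tp (k + 1)) ^ 3 := by
  have tp_mono : MonotoneOn tp (Set.Iic N) :=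
    monotoneOn_of_le_add_one Set.ordConnected_Iic fun k _ _ hk ↦ htp k hk
  have tp_nonneg {k : ℕ} (hk : k ≤ N) : 0 ≤ tp k :=
    h0.trans (tp_mono (Nat.zero_le N) hk (Nat.zero_le k))
  refine ⟨fun k _ hkN t ht ↦
    integral_norm_sq_xt_sub_xts_le hP ((tp_nonneg (by lia)).trans ht.1) ht.2, ?_⟩
  rw [Finset.mul_sum, Finset.mul_sum, ← Finset.sum_add_distrib]
  refine Finset.sum_le_sum fun k hk ↦ ?_
  have hkN : k < N := Finset.mem_range.1 hk
  have step_subset : Set.Icc (tp k) (tp (k + 1)) ⊆ Set.Icc 0 (tp N) :=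
    Set.Icc_subset_Icc (tp_nonneg hkN.le) (tp_mono hkN Set.self_mem_Iic hkN)
  have hg_step : IntervalIntegrable (fun u ↦ g u ^ 2) volume (tp k) (tp (k + 1)) :=
    (intervalIntegrable_iff_integrableOn_Icc_of_le (htp k hkN)).2 (hg.mono_set step_subset)
  exact integral_sq_mul_integral_norm_sq_xt_sub_xts_le hP hg_step (tp_nonneg hkN.le) (htp k hkN)

/-- Lemma `linear-discretization`: bound on `E‖x_t − x_{t_k}‖²` along the
forward process, and on the resulting summed discretization error. -/
theorem statement6 :
    ∃ C : ℝ, 0 < C ∧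
      ∀ (d N : ℕ) (T : ℝ) (P : Measure (Vec d)) (g : ℝ → ℝ) (tp : ℕ → ℝ),
        IsProbabilityMeasure P → 0 < N →
        ContinuousOn g (Set.Icc 0 T) → (∀ t ∈ Set.Ioc (0 : ℝ) T, 0 < g t) →
        0 ≤ tp 0 → tp N = T → (∀ k < N, tp k < tp (k + 1)) →
        Integrable (fun x => ‖x‖ ^ 2) P →
        (∀ k < N, Gvar g (tp k) (tp (k + 1)) ≤ 1) →
        (∀ k, 1 ≤ k → k ≤ N → ∀ t ∈ Set.Icc (tp (k - 1)) (tp k),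
          (∫ ω, ‖xt d g t ω - xts d g t (tp k) ω‖ ^ 2 ∂(coupleMeasure d P)) ≤
            C * ((d : ℝ) * Gvar g t (tp k) +
              (∫ x, ‖x‖ ^ 2 ∂P) * (Gvar g t (tp k)) ^ 2)) ∧
        (∑ k ∈ Finset.range N, ∫ t in tp k..tp (k + 1),
            (g t) ^ 2 * ∫ ω, ‖xt d g t ω - xts d g t (tp (k + 1)) ω‖ ^ 2
              ∂(coupleMeasure d P)) ≤
          C * ((d : ℝ) * ∑ k ∈ Finset.range N, (Gvar g (tp k) (tp (k + 1))) ^ 2 +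
            (∫ x, ‖x‖ ^ 2 ∂P) * ∑ k ∈ Finset.range N, (Gvar g (tp k) (tp (k + 1))) ^ 3) := by
  refine ⟨1, one_pos, fun d N T P g tp _ _ hg _ h0 hT htp hP _ ↦ ?_⟩
  simpa only [one_mul] using statement6_general
    (hT ▸ (hg.pow 2).integrableOn_Icc) h0 (fun k hk ↦ (htp k hk).le) hP

end DiffusionKL
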